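/- There exists a constant C, independent of m, with the following property: for every integer m ≥ 1 and all axially symmetric functions u, ω, with u twice and ω once continuously differentiable on a neighborhood of the closure of D_m, satisfying ∂_r² u + (1/r) ∂_r u + ∂_{x₃}² u = −( ∂_r ω + ω/r ) in D_m, u = 0 on ∂^H D_m, and ∂_r u = 0 on ∂^V D_m, one has sup_{D_m} |u| ≤ C ( sup_{D_m} |ω| + 1 )^{3/2} ( ∫_{D_m} ( |u| + 1 )² dx )^{1/2}. -/

import Mathlib

noncomputable section

open Real MeasureTheory Set

/-- Inner radius of the `j`-th rectangle: `r_j = 2^(-j)`. -/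
def rW (j : ℕ) : ℝ := (2 : ℝ) ^ (-(j : ℝ))

/-- Height of the `j`-th rectangle: `h_j = 2^(-β (j-1))`. -/
def hH (β : ℝ) (j : ℕ) : ℝ := (2 : ℝ) ^ (-β * ((j : ℝ) - 1))

/-- The rectangle `S_j` in the `(r, x₃)` cross-section. -/
def Srect (β : ℝ) (j : ℕ) : Set (ℝ × ℝ) :=
  {p : ℝ × ℝ | rW j ≤ p.1 ∧ p.1 < rW (j - 1) ∧ 0 < p.2 ∧ p.2 < hH β j}

/-- The `(r, x₃)` cross-section of the domain `D_m`. -/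
def Ddom (β : ℝ) (m : ℕ) : Set (ℝ × ℝ) := ⋃ j ∈ Finset.Icc 1 m, Srect β j

/-- The horizontal part `∂^H D_m` of the boundary of `D_m` (where `x₃` is locally constant). -/
def bdH (β : ℝ) (m : ℕ) : Set (ℝ × ℝ) :=
  {p : ℝ × ℝ | p.2 = 0 ∧ rW m ≤ p.1 ∧ p.1 ≤ 1} ∪
    ⋃ j ∈ Finset.Icc 1 m,
      {p : ℝ × ℝ | p.2 = hH β j ∧ rW j ≤ p.1 ∧ p.1 ≤ rW (j - 1)}

/-- The vertical part `∂^V D_m` of the boundary of `D_m` (where `r` is locally constant). -/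
def bdV (β : ℝ) (m : ℕ) : Set (ℝ × ℝ) :=
  {p : ℝ × ℝ | p.1 = 1 ∧ 0 ≤ p.2 ∧ p.2 ≤ 1} ∪
    {p : ℝ × ℝ | p.1 = rW m ∧ 0 ≤ p.2 ∧ p.2 ≤ hH β m} ∪
    ⋃ j ∈ Finset.Icc 1 (m - 1),
      {p : ℝ × ℝ | p.1 = rW j ∧ hH β (j + 1) ≤ p.2 ∧ p.2 ≤ hH β j}

/-- The full boundary `∂ D_m` of `D_m`. -/
def bdD (β : ℝ) (m : ℕ) : Set (ℝ × ℝ) := bdH β m ∪ bdV β m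

/-- The corner points of the polygonal cross-section of `D_m`
(i.e. the corner circles of the 3D domain). -/
def cornerSet (β : ℝ) (m : ℕ) : Set (ℝ × ℝ) :=
  ({(rW m, 0), ((1 : ℝ), 0), ((1 : ℝ), (1 : ℝ)), (rW m, hH β m)} : Set (ℝ × ℝ)) ∪
    ⋃ j ∈ Finset.Icc 1 (m - 1),
      ({(rW j, hH β j), (rW j, hH β (j + 1))} : Set (ℝ × ℝ))

/-- Radial partial derivative `∂_r`. -/
def pdr (F : ℝ × ℝ → ℝ) (p : ℝ × ℝ) : ℝ := deriv (fun r => F (r, p.2)) p.1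

/-- Vertical partial derivative `∂_{x₃}`. -/
def pdz (F : ℝ × ℝ → ℝ) (p : ℝ × ℝ) : ℝ := deriv (fun z => F (p.1, z)) p.2

/-- The axially symmetric Laplacian `Δ = ∂_r² + (1/r) ∂_r + ∂_{x₃}²`. -/
def cylLap (F : ℝ × ℝ → ℝ) (p : ℝ × ℝ) : ℝ :=
  pdr (pdr F) p + (1 / p.1) * pdr F p + pdz (pdz F) p

/-- The integral of an axially symmetric function over the 3-dimensional domain `D_m`,
computed in the cross-section: `∫_{D_m} f dx = 2π ∬ F r dr dx₃`. -/
def cylIntegral (β : ℝ) (m : ℕ) (F : ℝ × ℝ → ℝ) : ℝ :=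
  ∫ p in Ddom β m, F p * (2 * π * p.1)

/-- The vertical cross-section segment `D_m ∩ {r = c}` of the cross-section. -/
def vertSeg (β : ℝ) (m : ℕ) (c : ℝ) : Set ℝ := {z : ℝ | (c, z) ∈ Ddom β m}
/- The proof is a De Giorgi iteration. Let `Φ` be the primitive of a cutoff `χ` which is supported
in `{s > k}`, `k ≥ 0`. Testing the equation with `Φ(u)` on one cell `S_j` leaves boundary terms only
on the vertical sides. Their Neumann parts are controlled by a trace inequality, and the fluxes
through the openings between neighbouring cells telescope, whence
`∫ χ(u)|∇u|² ≤ 9 L ∫ χ(u)(|∂_r u| + |∂_z u|)` over `D_m` if `|ω| ≤ L`, with a constant that does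
not depend on `m`, and the right side is at most `C L² ∫ χ(u)`.

On `S_j` the weight `r` is comparable to `2⁻ʲ` and the height is at most twice the width, because
`β ≥ 1`, so that the Poincaré and Ladyzhenskaya inequalities for `Φ(u)`, which vanishes for `z = 0`,
hold on all cells with the same scale-invariant constants. They bound the mass of a higher
superlevel set by the power `3/2` of that of a lower one. Iterated along levels increasing to a
multiple of `L`, this gives `|u| ≤ C sup |ω|`. The claim follows, since the integral in it is at
least `1`. -/

section PartialDerivatives

variable {f : ℝ × ℝ → ℝ} {p : ℝ × ℝ}

lemma hasDerivAt_fst_slice (hf : DifferentiableAt ℝ f p) :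
    HasDerivAt (fun r => f (r, p.2)) (fderiv ℝ f p (1, 0)) p.1 :=
  hf.hasFDerivAt.comp_hasDerivAt p.1 ((hasDerivAt_id p.1).prodMk (hasDerivAt_const p.1 p.2))

lemma hasDerivAt_snd_slice (hf : DifferentiableAt ℝ f p) :
    HasDerivAt (fun z => f (p.1, z)) (fderiv ℝ f p (0, 1)) p.2 :=
  hf.hasFDerivAt.comp_hasDerivAt p.2 ((hasDerivAt_const p.2 p.1).prodMk (hasDerivAt_id p.2))

lemma pdr_eq_fderiv (hf : DifferentiableAt ℝ f p) : pdr f p = fderiv ℝ f p (1, 0) :=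
  (hasDerivAt_fst_slice hf).deriv

lemma pdz_eq_fderiv (hf : DifferentiableAt ℝ f p) : pdz f p = fderiv ℝ f p (0, 1) :=
  (hasDerivAt_snd_slice hf).deriv

lemma hasDerivAt_pdr (hf : DifferentiableAt ℝ f p) :
    HasDerivAt (fun r => f (r, p.2)) (pdr f p) p.1 :=
  pdr_eq_fderiv hf ▸ hasDerivAt_fst_slice hf

lemma hasDerivAt_pdz (hf : DifferentiableAt ℝ f p) :
    HasDerivAt (fun z => f (p.1, z)) (pdz f p) p.2 :=
  pdz_eq_fderiv hf ▸ hasDerivAt_snd_slice hf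

lemma pdr_neg : pdr (fun q => -f q) p = -pdr f p := deriv.fun_neg

lemma pdz_neg : pdz (fun q => -f q) p = -pdz f p := deriv.fun_neg

lemma eventually_differentiableAt {n : WithTop ℕ∞} (hf : ContDiffAt ℝ n f p)
    (hn : 1 ≤ n) : ∀ᶠ q in nhds p, DifferentiableAt ℝ f q :=
  ((hf.of_le hn).eventually (by simp)).mono fun _ hq => hq.differentiableAt one_ne_zero

lemma contDiffAt_pdr {m n : WithTop ℕ∞} (hf : ContDiffAt ℝ n f p) (hmn : m + 1 ≤ n) :
    ContDiffAt ℝ m (pdr f) p :=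
  ((hf.fderiv_right hmn).clm_apply contDiffAt_const).congr_of_eventuallyEq
    ((eventually_differentiableAt hf (le_add_self.trans hmn)).mono
      fun _ hq => pdr_eq_fderiv hq)

lemma contDiffAt_pdz {m n : WithTop ℕ∞} (hf : ContDiffAt ℝ n f p) (hmn : m + 1 ≤ n) :
    ContDiffAt ℝ m (pdz f) p :=
  ((hf.fderiv_right hmn).clm_apply contDiffAt_const).congr_of_eventuallyEq
    ((eventually_differentiableAt hf (le_add_self.trans hmn)).mono
      fun _ hq => pdz_eq_fderiv hq)

variable {K : Set (ℝ × ℝ)}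

lemma continuousOn_pdr (hf : ∀ p ∈ K, ContDiffAt ℝ 1 f p) : ContinuousOn (pdr f) K :=
  fun p hp => (contDiffAt_pdr (hf p hp) (by simp) : ContDiffAt ℝ 0 _ p).continuousAt
    |>.continuousWithinAt

lemma continuousOn_pdz (hf : ∀ p ∈ K, ContDiffAt ℝ 1 f p) : ContinuousOn (pdz f) K :=
  fun p hp => (contDiffAt_pdz (hf p hp) (by simp) : ContDiffAt ℝ 0 _ p).continuousAt
    |>.continuousWithinAt

end PartialDerivatives

lemma continuousOn_of_forall_contDiffAt {E F : Type*} [NormedAddCommGroup E] [NormedSpace ℝ E]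
    [NormedAddCommGroup F] [NormedSpace ℝ F] {n : WithTop ℕ∞} {f : E → F} {K : Set E}
    (hf : ∀ p ∈ K, ContDiffAt ℝ n f p) : ContinuousOn f K :=
  fun p hp => (hf p hp).continuousAt.continuousWithinAt

lemma setIntegral_mono_of_isCompact {X : Type*} [TopologicalSpace X] [MeasurableSpace X]
    [BorelSpace X] [T2Space X] {μ : Measure X} [IsFiniteMeasureOnCompacts μ]
    {K : Set X} (hK : IsCompact K) {f g : X → ℝ} (hf : ContinuousOn f K) (hg : ContinuousOn g K)
    (h : ∀ x ∈ K, f x ≤ g x) : ∫ x in K, f x ∂μ ≤ ∫ x in K, g x ∂μ :=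
  setIntegral_mono_on (hf.integrableOn_compact' hK hK.measurableSet)
    (hg.integrableOn_compact' hK hK.measurableSet) hK.measurableSet h

section Slices

variable {f f' : ℝ → ℝ} {a b : ℝ}

lemma le_add_setIntegral_abs_deriv (hd : ∀ x ∈ Icc a b, HasDerivAt f (f' x) x)
    (hc : ContinuousOn f' (Icc a b)) {x y : ℝ} (hx : x ∈ Icc a b) (hy : y ∈ Icc a b) :
    f x ≤ f y + ∫ t in Icc a b, |f' t| := by
  have hsub : uIcc y x ⊆ Icc a b := uIcc_subset_Icc hy hx
  have hftc : ∫ t in y..x, f' t = f x - f y :=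
    intervalIntegral.integral_eq_sub_of_hasDerivAt (fun t ht => hd t (hsub ht))
      (hc.mono hsub).intervalIntegrable
  have hnorm : |∫ t in y..x, f' t| ≤ ∫ t in uIoc y x, |f' t| := by
    simpa only [Real.norm_eq_abs] using
      intervalIntegral.norm_integral_le_integral_norm_uIoc (f := f') (a := y) (b := x)
  have hmono : ∫ t in uIoc y x, |f' t| ≤ ∫ t in Icc a b, |f' t| :=
    setIntegral_mono_set (hc.abs.integrableOn_compact isCompact_Icc)
      (.of_forall fun _ => abs_nonneg _) (uIoc_subset_uIcc.trans hsub).eventuallyLE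
  linarith [le_abs_self (∫ t in y..x, f' t)]

lemma mul_le_setIntegral_add_abs_deriv (hd : ∀ x ∈ Icc a b, HasDerivAt f (f' x) x)
    (hc : ContinuousOn f' (Icc a b)) {x : ℝ} (hx : x ∈ Icc a b) :
    (b - a) * f x ≤ ∫ y in Icc a b, (f y + (b - a) * |f' y|) := by
  have hab : a ≤ b := hx.1.trans hx.2
  have hf : ContinuousOn f (Icc a b) := fun y hy => (hd y hy).continuousAt.continuousWithinAt
  have hmean : ∫ _ in Icc a b, f x ≤ ∫ y in Icc a b, (f y + ∫ t in Icc a b, |f' t|) :=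
    setIntegral_mono_of_isCompact isCompact_Icc continuousOn_const
      (hf.add continuousOn_const) fun y hy => le_add_setIntegral_abs_deriv hd hc hx hy
  have hif : IntegrableOn f (Icc a b) := hf.integrableOn_compact isCompact_Icc
  have hif' : IntegrableOn (fun y => |f' y|) (Icc a b) :=
    hc.abs.integrableOn_compact isCompact_Icc
  rw [setIntegral_const, integral_add hif (integrable_const _), setIntegral_const,
    Real.volume_real_Icc_of_le hab, smul_eq_mul, smul_eq_mul] at hmean
  rwa [integral_add hif (hif'.const_mul _), integral_const_mul]

end Slices

section Rectangle

variable {a b c d : ℝ}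

lemma setIntegral_rect_eq {f : ℝ × ℝ → ℝ} (hf : ContinuousOn f (Icc a b ×ˢ Icc c d)) :
    ∫ p in Icc a b ×ˢ Icc c d, f p = ∫ x in Icc a b, ∫ y in Icc c d, f (x, y) :=
  setIntegral_prod f (hf.integrableOn_compact (isCompact_Icc.prod isCompact_Icc))

lemma integrable_prod_restrict_Icc {f : ℝ × ℝ → ℝ} (hf : ContinuousOn f (Icc a b ×ˢ Icc c d)) :
    Integrable f ((volume.restrict (Icc a b)).prod (volume.restrict (Icc c d))) := by
  rw [Measure.prod_restrict]
  exact hf.integrableOn_compact (isCompact_Icc.prod isCompact_Icc)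

lemma setIntegral_rect_eq_symm {f : ℝ × ℝ → ℝ} (hf : ContinuousOn f (Icc a b ×ˢ Icc c d)) :
    ∫ p in Icc a b ×ˢ Icc c d, f p = ∫ y in Icc c d, ∫ x in Icc a b, f (x, y) := by
  rw [Measure.volume_eq_prod, ← Measure.prod_restrict,
    integral_prod_symm f (integrable_prod_restrict_Icc hf)]

lemma setIntegral_rect_le_mul_of_le_mul {ψ F G : ℝ × ℝ → ℝ}
    (hψ : ContinuousOn ψ (Icc a b ×ˢ Icc c d)) (hF : ContinuousOn F (Icc a b ×ˢ Icc c d))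
    (hG : ContinuousOn G (Icc a b ×ˢ Icc c d))
    (h : ∀ p ∈ Icc a b ×ˢ Icc c d,
      ψ p ≤ (∫ y in Icc c d, F (p.1, y)) * ∫ x in Icc a b, G (x, p.2)) :
    ∫ p in Icc a b ×ˢ Icc c d, ψ p ≤
      (∫ p in Icc a b ×ˢ Icc c d, F p) * ∫ p in Icc a b ×ˢ Icc c d, G p := by
  rw [setIntegral_rect_eq hF, setIntegral_rect_eq_symm hG, ← setIntegral_prod_mul]
  have hprod := (integrable_prod_restrict_Icc hF).integral_prod_left.mul_prod
    (integrable_prod_restrict_Icc hG).integral_prod_right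
  rw [Measure.prod_restrict] at hprod
  exact setIntegral_mono_on (hψ.integrableOn_compact (isCompact_Icc.prod isCompact_Icc)) hprod
    (measurableSet_Icc.prod measurableSet_Icc) h

lemma setIntegral_rect_le_mul_of_le {ψ F : ℝ × ℝ → ℝ} (hcd : c ≤ d)
    (hψ : ContinuousOn ψ (Icc a b ×ˢ Icc c d)) (hF : ContinuousOn F (Icc a b ×ˢ Icc c d))
    (h : ∀ p ∈ Icc a b ×ˢ Icc c d, ψ p ≤ ∫ y in Icc c d, F (p.1, y)) :
    ∫ p in Icc a b ×ˢ Icc c d, ψ p ≤ (d - c) * ∫ p in Icc a b ×ˢ Icc c d, F p := by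
  rw [setIntegral_rect_eq hψ, setIntegral_rect_eq hF, ← integral_const_mul]
  refine setIntegral_mono_on (integrable_prod_restrict_Icc hψ).integral_prod_left
    ((integrable_prod_restrict_Icc hF).integral_prod_left.const_mul _) measurableSet_Icc
    fun x hx => ?_
  have hslice : ∫ y in Icc c d, ψ (x, y) ≤ ∫ _ in Icc c d, ∫ y in Icc c d, F (x, y) :=
    setIntegral_mono_of_isCompact isCompact_Icc
      (hψ.comp (Continuous.continuousOn (by fun_prop)) fun y hy => ⟨hx, hy⟩)
      continuousOn_const fun y hy => h (x, y) ⟨hx, hy⟩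
  rwa [setIntegral_const, Real.volume_real_Icc_of_le hcd, smul_eq_mul] at hslice

variable {φ : ℝ × ℝ → ℝ} (hφ : ∀ p ∈ Icc a b ×ˢ Icc c d, ContDiffAt ℝ 1 φ p)
include hφ

lemma le_setIntegral_abs_pdz (h0 : ∀ r ∈ Icc a b, φ (r, c) = 0) {p : ℝ × ℝ}
    (hp : p ∈ Icc a b ×ˢ Icc c d) : φ p ≤ ∫ y in Icc c d, |pdz φ (p.1, y)| := by
  have hosc := le_add_setIntegral_abs_deriv (f := fun y => φ (p.1, y))
    (fun y hy => hasDerivAt_pdz ((hφ (p.1, y) ⟨hp.1, hy⟩).differentiableAt one_ne_zero))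
    ((continuousOn_pdz hφ).comp (by fun_prop) fun y hy => ⟨hp.1, hy⟩)
    hp.2 (left_mem_Icc.2 (hp.2.1.trans hp.2.2))
  rwa [h0 p.1 hp.1, zero_add] at hosc

lemma mul_le_setIntegral_add_abs_pdr {p : ℝ × ℝ} (hp : p ∈ Icc a b ×ˢ Icc c d) :
    (b - a) * φ p ≤ ∫ x in Icc a b, (φ (x, p.2) + (b - a) * |pdr φ (x, p.2)|) :=
  mul_le_setIntegral_add_abs_deriv (f := fun x => φ (x, p.2))
    (fun x hx => hasDerivAt_pdr ((hφ (x, p.2) ⟨hx, hp.2⟩).differentiableAt one_ne_zero))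
    ((continuousOn_pdr hφ).comp (by fun_prop) fun x hx => ⟨hx, hp.2⟩) hp.1

lemma continuousOn_add_abs_pdr :
    ContinuousOn (fun p => φ p + (b - a) * |pdr φ p|) (Icc a b ×ˢ Icc c d) :=
  (continuousOn_of_forall_contDiffAt hφ).add (continuousOn_const.mul (continuousOn_pdr hφ).abs)

lemma setIntegral_le_mul_setIntegral_abs_pdz (hcd : c ≤ d)
    (h0 : ∀ r ∈ Icc a b, φ (r, c) = 0) :
    ∫ p in Icc a b ×ˢ Icc c d, φ p ≤ (d - c) * ∫ p in Icc a b ×ˢ Icc c d, |pdz φ p| :=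
  setIntegral_rect_le_mul_of_le hcd (continuousOn_of_forall_contDiffAt hφ)
    (continuousOn_pdz hφ).abs fun _ => le_setIntegral_abs_pdz hφ h0

lemma mul_setIntegral_vertical_le {r : ℝ} (hr : r ∈ Icc a b) :
    (b - a) * ∫ y in Icc c d, φ (r, y) ≤
      ∫ p in Icc a b ×ˢ Icc c d, (φ p + (b - a) * |pdr φ p|) := by
  have hcont : ContinuousOn (fun y => φ (r, y)) (Icc c d) :=
    (continuousOn_of_forall_contDiffAt hφ).comp (by fun_prop) fun y hy => ⟨hr, hy⟩
  rw [setIntegral_rect_eq_symm (continuousOn_add_abs_pdr hφ), ← integral_const_mul]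
  exact setIntegral_mono_on ((hcont.integrableOn_compact isCompact_Icc).const_mul _)
    (integrable_prod_restrict_Icc (continuousOn_add_abs_pdr hφ)).integral_prod_right
    measurableSet_Icc fun y hy => mul_le_setIntegral_add_abs_pdr hφ (p := (r, y)) ⟨hr, hy⟩

/- Ladyzhenskaya's inequality: a value of `φ` is bounded both by a vertical and by a horizontal
line integral of its gradient, and the product of the two bounds integrates as a product. -/
lemma mul_setIntegral_sq_le (hnn : ∀ p ∈ Icc a b ×ˢ Icc c d, 0 ≤ φ p)
    (h0 : ∀ r ∈ Icc a b, φ (r, c) = 0) :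
    (b - a) * ∫ p in Icc a b ×ˢ Icc c d, φ p ^ 2 ≤
      (∫ p in Icc a b ×ˢ Icc c d, |pdz φ p|) *
        ∫ p in Icc a b ×ˢ Icc c d, (φ p + (b - a) * |pdr φ p|) := by
  rw [← integral_const_mul]
  refine setIntegral_rect_le_mul_of_le_mul
    (continuousOn_const.mul ((continuousOn_of_forall_contDiffAt hφ).pow 2))
    (continuousOn_pdz hφ).abs (continuousOn_add_abs_pdr hφ) fun p hp => ?_
  have hv := le_setIntegral_abs_pdz hφ h0 hp
  have hba : 0 ≤ b - a := sub_nonneg.2 (hp.1.1.trans hp.1.2)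
  calc (b - a) * φ p ^ 2 = φ p * ((b - a) * φ p) := by ring
    _ ≤ _ := mul_le_mul hv (mul_le_setIntegral_add_abs_pdr hφ hp)
      (mul_nonneg hba (hnn p hp)) ((hnn p hp).trans hv)

omit hφ

lemma setIntegral_pdr_add_pdz {f g : ℝ × ℝ → ℝ} (hab : a ≤ b) (hcd : c ≤ d)
    (hf : ∀ p ∈ Icc a b ×ˢ Icc c d, ContDiffAt ℝ 1 f p)
    (hg : ∀ p ∈ Icc a b ×ˢ Icc c d, ContDiffAt ℝ 1 g p) :
    ∫ p in Icc a b ×ˢ Icc c d, (pdr f p + pdz g p) =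
      (((∫ x in a..b, g (x, d)) - ∫ x in a..b, g (x, c)) + ∫ y in c..d, f (b, y)) -
        ∫ y in c..d, f (a, y) := by
  have hfderiv : EqOn (fun p => pdr f p + pdz g p)
      (fun p => fderiv ℝ f p (1, 0) + fderiv ℝ g p (0, 1)) (Icc a b ×ˢ Icc c d) := fun p hp => by
    simp only [pdr_eq_fderiv ((hf p hp).differentiableAt one_ne_zero),
      pdz_eq_fderiv ((hg p hp).differentiableAt one_ne_zero)]
  have hint : IntegrableOn (fun p => pdr f p + pdz g p) (Icc a b ×ˢ Icc c d) :=
    ((continuousOn_pdr hf).add (continuousOn_pdz hg)).integrableOn_compact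
      (isCompact_Icc.prod isCompact_Icc)
  have hmeas : MeasurableSet (Icc a b ×ˢ Icc c d) := measurableSet_Icc.prod measurableSet_Icc
  rw [setIntegral_congr_fun hmeas hfderiv]
  have hint' := hint.congr_fun hfderiv hmeas
  have hsub : Ioo a b ×ˢ Ioo c d ⊆ Icc a b ×ˢ Icc c d :=
    prod_mono Ioo_subset_Icc_self Ioo_subset_Icc_self
  have hf' := fun p hp => ((hf p hp).differentiableAt one_ne_zero).hasFDerivAt
  have hg' := fun p hp => ((hg p hp).differentiableAt one_ne_zero).hasFDerivAt
  rw [Icc_prod_Icc] at hint' ⊢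
  exact integral_divergence_prod_Icc_of_hasFDerivAt_of_le f g _ _ (a, c) (b, d) ⟨hab, hcd⟩
    (Icc_prod_Icc a b c d ▸ continuousOn_of_forall_contDiffAt hf)
    (Icc_prod_Icc a b c d ▸ continuousOn_of_forall_contDiffAt hg)
    (fun p hp => hf' p (hsub hp)) (fun p hp => hg' p (hsub hp)) hint'

end Rectangle

section Summation

variable {ι : Type*} {s : Finset ι} {x y : ι → ℝ} {c : ℝ}

lemma sum_sq_le_mul_sum_pow_three (hc : 0 ≤ c) (hx : ∀ i ∈ s, 0 ≤ x i) (hy : ∀ i ∈ s, 0 ≤ y i)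
    (h : ∀ i ∈ s, y i ^ 2 ≤ c * x i ^ 3) : (∑ i ∈ s, y i) ^ 2 ≤ c * (∑ i ∈ s, x i) ^ 3 := by
  set X := ∑ i ∈ s, x i
  have hX : 0 ≤ X := Finset.sum_nonneg hx
  have hterm : ∀ i ∈ s, y i ≤ √(c * X) * x i := fun i hi => by
    have hi0 := hx i hi
    refine le_of_sq_le_sq ?_ (by positivity)
    calc y i ^ 2 ≤ c * x i ^ 3 := h i hi
      _ = c * x i * x i ^ 2 := by ring
      _ ≤ c * X * x i ^ 2 := by gcongr; exact Finset.single_le_sum hx hi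
      _ = (√(c * X) * x i) ^ 2 := by rw [mul_pow, Real.sq_sqrt (by positivity)]
  calc (∑ i ∈ s, y i) ^ 2 ≤ (∑ i ∈ s, √(c * X) * x i) ^ 2 :=
        pow_le_pow_left₀ (Finset.sum_nonneg hy) (Finset.sum_le_sum hterm) 2
    _ = c * X ^ 3 := by
        rw [← Finset.mul_sum, mul_pow, Real.sq_sqrt (by positivity)]; ring

end Summation

section DeGiorgi

/- Along the levels `k_n = 4 * d * (1 - 2⁻ⁿ)` with widths `δ_n = 2⁻ⁿ * d` the recursion gives
`N k_n δ_n ≤ 8⁻ⁿ`. -/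
lemma eq_zero_of_deGiorgi {N : ℝ → ℝ → ℝ} {d δ : ℝ} (hN : ∀ k δ, 0 ≤ N k δ) (hd : 0 < d)
    (hstart : N 0 d ≤ 1)
    (hrec : ∀ k k' δ δ', 0 ≤ k → 0 < δ → 0 < δ' → k + 2 * δ ≤ k' →
      64 * N k' δ' ^ 2 * δ ^ 3 ≤ d ^ 3 * N k δ ^ 3) (hδ : 0 < δ) :
    N (4 * d) δ = 0 := by
  set q : ℕ → ℝ := fun n => (1 / 2) ^ n
  have hq : ∀ n, 0 < q n := fun n => by positivity
  have hq_succ : ∀ n, q (n + 1) = q n / 2 := fun n => by simp only [q, pow_succ]; ring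
  have hlevel : ∀ n, 0 ≤ 4 * d * (1 - q n) := fun n =>
    mul_nonneg (by positivity) (sub_nonneg.2 (pow_le_one₀ (by norm_num) (by norm_num)))
  have hstep : ∀ n k' δ', 0 < δ' → 4 * d * (1 - q n) + 2 * (d * q n) ≤ k' →
      N (4 * d * (1 - q n)) (d * q n) ≤ q n ^ 3 → N k' δ' ≤ q (n + 1) ^ 3 := by
    intro n k' δ' hδ' hk' hn
    have hqn := hq n
    have hbound : 64 * N k' δ' ^ 2 * (d * q n) ^ 3 ≤ d ^ 3 * (q n ^ 3) ^ 3 :=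
      (hrec _ _ _ _ (hlevel n) (mul_pos hd hqn) hδ' hk').trans <|
        mul_le_mul_of_nonneg_left (pow_le_pow_left₀ (hN _ _) hn 3) (by positivity)
    refine le_of_sq_le_sq (le_of_mul_le_mul_right ?_ (by positivity : 0 < 64 * (d * q n) ^ 3))
      (by have := hq (n + 1); positivity)
    rw [hq_succ]
    linear_combination hbound
  have hdecay : ∀ n, N (4 * d * (1 - q n)) (d * q n) ≤ q n ^ 3 := fun n => by
    induction n with
    | zero => simpa [q] using hstart
    | succ n ih =>
      refine hstep n _ _ (mul_pos hd (hq _)) ?_ ih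
      rw [hq_succ]
      linarith
  have hq_tendsto : Filter.Tendsto q Filter.atTop (nhds 0) :=
    tendsto_pow_atTop_nhds_zero_of_lt_one (by norm_num) (by norm_num)
  have hlimit : Filter.Tendsto (fun n => q (n + 1) ^ 3) Filter.atTop (nhds 0) := by
    simpa using (hq_tendsto.comp (Filter.tendsto_add_atTop_nat 1)).pow 3
  refine le_antisymm (ge_of_tendsto' hlimit fun n => hstep n _ _ hδ ?_ (hdecay n)) (hN _ _)
  linarith [mul_pos hd (hq n)]

end DeGiorgi

lemma mul_le_mul_rpow_mul_rpow {c x y s t : ℝ} (hc : 0 ≤ c) (hx : 0 ≤ x) (hy : 1 ≤ y)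
    (hs : 1 ≤ s) (ht : 0 ≤ t) : c * x ≤ c * (x + 1) ^ s * y ^ t := by
  have hxs : x ≤ (x + 1) ^ s :=
    (le_add_of_nonneg_right zero_le_one).trans (Real.self_le_rpow_of_one_le (by linarith) hs)
  exact (mul_le_mul_of_nonneg_left hxs hc).trans
    (le_mul_of_one_le_right (by positivity) (Real.one_le_rpow hy ht))

section Cutoff

/-- A cutoff function for the truncation method: continuous, with values in `[0, 1]`, vanishing on
the nonpositive half-line. -/
structure IsCutoff (χ : ℝ → ℝ) : Prop where
  continuous : Continuous χ
  nonneg : ∀ s, 0 ≤ χ s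
  le_one : ∀ s, χ s ≤ 1
  eq_zero_of_nonpos : ∀ s ≤ 0, χ s = 0

/-- The primitive of `χ` vanishing at `0`; its composition with a solution is the test function
of the energy estimate. -/
def primitive (χ : ℝ → ℝ) (s : ℝ) : ℝ := ∫ t in 0..s, χ t

/-- A cutoff rising from `0` to `1` on the interval `[k, k + δ]`, which selects the superlevel set
at level `k`. -/
def cutoff (k δ s : ℝ) : ℝ := Real.smoothTransition ((s - k) / δ)

variable {χ : ℝ → ℝ}

lemma primitive_zero : primitive χ 0 = 0 := intervalIntegral.integral_same

lemma hasDerivAt_primitive (hχ : Continuous χ) (s : ℝ) : HasDerivAt (primitive χ) (χ s) s :=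
  intervalIntegral.integral_hasDerivAt_right (hχ.intervalIntegrable _ _)
    (hχ.stronglyMeasurableAtFilter _ _) hχ.continuousAt

lemma contDiff_primitive (hχ : Continuous χ) : ContDiff ℝ 1 (primitive χ) := by
  have hderiv : deriv (primitive χ) = χ := funext fun s => (hasDerivAt_primitive hχ s).deriv
  exact contDiff_one_iff_deriv.2
    ⟨fun s => (hasDerivAt_primitive hχ s).differentiableAt, by rwa [hderiv]⟩

lemma IsCutoff.monotone_primitive (hχ : IsCutoff χ) : Monotone (primitive χ) :=
  monotone_of_hasDerivAt_nonneg (hasDerivAt_primitive hχ.continuous) hχ.nonneg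

lemma IsCutoff.primitive_nonneg (hχ : IsCutoff χ) (s : ℝ) : 0 ≤ primitive χ s := by
  rcases le_total 0 s with hs | hs
  · exact primitive_zero (χ := χ) ▸ hχ.monotone_primitive hs
  · refine (intervalIntegral.integral_zero_ae (.of_forall fun t ht => ?_)).ge
    rw [uIoc_of_ge hs] at ht
    exact hχ.eq_zero_of_nonpos t ht.2

variable {k δ s : ℝ}

lemma isCutoff_cutoff (hk : 0 ≤ k) (hδ : 0 < δ) : IsCutoff (cutoff k δ) where
  continuous := Real.smoothTransition.continuous.comp (by fun_prop)
  nonneg _ := Real.smoothTransition.nonneg _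
  le_one _ := Real.smoothTransition.le_one _
  eq_zero_of_nonpos _ hs := Real.smoothTransition.zero_of_nonpos
    (div_nonpos_of_nonpos_of_nonneg (by linarith) hδ.le)

lemma cutoff_eq_zero_iff (hδ : 0 < δ) : cutoff k δ s = 0 ↔ s ≤ k := by
  refine ⟨fun h => ?_, fun h => Real.smoothTransition.zero_of_nonpos
    (div_nonpos_of_nonpos_of_nonneg (sub_nonpos.2 h) hδ.le)⟩
  by_contra! hks
  exact (Real.smoothTransition.pos_of_pos (div_pos (sub_pos.2 hks) hδ)).ne' h

lemma le_primitive_cutoff (hk : 0 ≤ k) (hδ : 0 < δ) (hs : k + 2 * δ ≤ s) :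
    δ ≤ primitive (cutoff k δ) s := by
  have hχ := isCutoff_cutoff hk hδ
  have hint := hχ.continuous.intervalIntegrable (μ := volume)
  have hone : ∀ t ∈ Icc (k + δ) s, 1 ≤ cutoff k δ t := fun t ht =>
    (Real.smoothTransition.one_of_one_le ((one_le_div hδ).2 (by linarith [ht.1]))).ge
  calc δ ≤ ∫ _ in (k + δ)..s, (1 : ℝ) := by
        rw [intervalIntegral.integral_const, smul_eq_mul]; linarith
    _ ≤ ∫ t in (k + δ)..s, cutoff k δ t :=
        intervalIntegral.integral_mono_on (by linarith) intervalIntegrable_const (hint _ _) hone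
    _ ≤ primitive (cutoff k δ) (k + δ) + ∫ t in (k + δ)..s, cutoff k δ t :=
        le_add_of_nonneg_left (hχ.primitive_nonneg _)
    _ = primitive (cutoff k δ) s :=
        intervalIntegral.integral_add_adjacent_intervals (hint _ _) (hint _ _)

end Cutoff

section DyadicRectangle

/-- The closed rectangle `[a, 2 * a] × [0, h]`; the cross-section is made of such cells. -/
def dyadicRect (a h : ℝ) : Set (ℝ × ℝ) := Icc a (2 * a) ×ˢ Icc 0 h

/-- The integral of `χ(u)(|∂_r u| + |∂_z u|)` over a dyadic rectangle, with the weight `r` of the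
three-dimensional volume element. -/
def gradMass (χ : ℝ → ℝ) (u : ℝ × ℝ → ℝ) (a h : ℝ) : ℝ :=
  ∫ p in dyadicRect a h, p.1 * (χ (u p) * (|pdr u p| + |pdz u p|))

/-- The integral of `χ(u)|∇u|²` over a dyadic rectangle, with the weight `r` of the
three-dimensional volume element. -/
def energy (χ : ℝ → ℝ) (u : ℝ × ℝ → ℝ) (a h : ℝ) : ℝ :=
  ∫ p in dyadicRect a h, p.1 * (χ (u p) * (pdr u p ^ 2 + pdz u p ^ 2))

/-- The integral of `χ(u)` over a dyadic rectangle, with the weight `r` of the three-dimensional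
volume element. -/
def mass (χ : ℝ → ℝ) (u : ℝ × ℝ → ℝ) (a h : ℝ) : ℝ :=
  ∫ p in dyadicRect a h, p.1 * χ (u p)

/-- The radial component of the flux `r (∇u + ω e_r) Φ(u)`, where `Φ` is the primitive of `χ`;
testing the equation with `Φ(u)` amounts to computing the divergence of this flux. -/
def radialFlux (χ : ℝ → ℝ) (u ω : ℝ × ℝ → ℝ) (p : ℝ × ℝ) : ℝ :=
  p.1 * (pdr u p + ω p) * primitive χ (u p)

/-- The vertical component of the flux `r (∇u + ω e_r) Φ(u)`, where `Φ` is the primitive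
of `χ`. -/
def verticalFlux (χ : ℝ → ℝ) (u : ℝ × ℝ → ℝ) (p : ℝ × ℝ) : ℝ :=
  p.1 * pdz u p * primitive χ (u p)

variable {χ : ℝ → ℝ} {u ω : ℝ × ℝ → ℝ} {a h : ℝ}

lemma isCompact_dyadicRect : IsCompact (dyadicRect a h) := isCompact_Icc.prod isCompact_Icc

lemma volume_real_dyadicRect (ha : 0 ≤ a) (hh : 0 ≤ h) :
    volume.real (dyadicRect a h) = a * h := by
  rw [dyadicRect, Measure.volume_eq_prod, measureReal_prod_prod,
    Real.volume_real_Icc_of_le (by linarith), Real.volume_real_Icc_of_le hh]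
  ring

lemma gradMass_nonneg (hχ : ∀ s, 0 ≤ χ s) (ha : 0 ≤ a) : 0 ≤ gradMass χ u a h :=
  setIntegral_nonneg isCompact_dyadicRect.measurableSet fun _ hp =>
    mul_nonneg (ha.trans hp.1.1) (mul_nonneg (hχ _) (add_nonneg (abs_nonneg _) (abs_nonneg _)))

lemma mass_nonneg (hχ : ∀ s, 0 ≤ χ s) (ha : 0 ≤ a) : 0 ≤ mass χ u a h :=
  setIntegral_nonneg isCompact_dyadicRect.measurableSet fun _ hp =>
    mul_nonneg (ha.trans hp.1.1) (hχ _)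

section TestFunction

variable {p : ℝ × ℝ}

lemma hasDerivAt_primitive_comp_fst (hχ : Continuous χ) (hu : DifferentiableAt ℝ u p) :
    HasDerivAt (fun r => primitive χ (u (r, p.2))) (χ (u p) * pdr u p) p.1 :=
  HasDerivAt.comp (h₂ := primitive χ) p.1 (hasDerivAt_primitive hχ (u p)) (hasDerivAt_pdr hu)

lemma hasDerivAt_primitive_comp_snd (hχ : Continuous χ) (hu : DifferentiableAt ℝ u p) :
    HasDerivAt (fun z => primitive χ (u (p.1, z))) (χ (u p) * pdz u p) p.2 :=
  HasDerivAt.comp (h₂ := primitive χ) p.2 (hasDerivAt_primitive hχ (u p)) (hasDerivAt_pdz hu)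

lemma pdr_primitive_comp (hχ : Continuous χ) (hu : DifferentiableAt ℝ u p) :
    pdr (fun q => primitive χ (u q)) p = χ (u p) * pdr u p :=
  (hasDerivAt_primitive_comp_fst hχ hu).deriv

lemma pdz_primitive_comp (hχ : Continuous χ) (hu : DifferentiableAt ℝ u p) :
    pdz (fun q => primitive χ (u q)) p = χ (u p) * pdz u p :=
  (hasDerivAt_primitive_comp_snd hχ hu).deriv

lemma contDiffAt_primitive_comp (hχ : Continuous χ) (hu : ContDiffAt ℝ 1 u p) :
    ContDiffAt ℝ 1 (fun q => primitive χ (u q)) p :=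
  (contDiff_primitive hχ).contDiffAt.comp p hu

lemma contDiffAt_radialFlux (hχ : Continuous χ) (hu : ContDiffAt ℝ 2 u p)
    (hω : ContDiffAt ℝ 1 ω p) : ContDiffAt ℝ 1 (radialFlux χ u ω) p :=
  (contDiffAt_fst.mul ((contDiffAt_pdr hu one_add_one_eq_two.le).add hω)).mul
    (contDiffAt_primitive_comp hχ (hu.of_le one_le_two))

lemma contDiffAt_verticalFlux (hχ : Continuous χ) (hu : ContDiffAt ℝ 2 u p) :
    ContDiffAt ℝ 1 (verticalFlux χ u) p :=
  (contDiffAt_fst.mul (contDiffAt_pdz hu one_add_one_eq_two.le)).mul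
    (contDiffAt_primitive_comp hχ (hu.of_le one_le_two))

lemma pdr_radialFlux_add_pdz_verticalFlux (hχ : Continuous χ) (hp : p.1 ≠ 0)
    (hu : ContDiffAt ℝ 2 u p) (hω : ContDiffAt ℝ 1 ω p)
    (heq : cylLap u p = -(pdr ω p + ω p / p.1)) :
    pdr (radialFlux χ u ω) p + pdz (verticalFlux χ u) p =
      p.1 * (χ (u p) * (pdr u p ^ 2 + pdz u p ^ 2)) + ω p * (p.1 * (χ (u p) * pdr u p)) := by
  have hu1 : DifferentiableAt ℝ u p := hu.differentiableAt two_ne_zero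
  have hur := (contDiffAt_pdr hu one_add_one_eq_two.le).differentiableAt one_ne_zero
  have huz := (contDiffAt_pdz hu one_add_one_eq_two.le).differentiableAt one_ne_zero
  have hradial : pdr (radialFlux χ u ω) p =
      (1 * (pdr u p + ω p) + p.1 * (pdr (pdr u) p + pdr ω p)) * primitive χ (u p) +
        p.1 * (pdr u p + ω p) * (χ (u p) * pdr u p) :=
    (((hasDerivAt_id p.1).mul ((hasDerivAt_pdr hur).add
      (hasDerivAt_pdr (hω.differentiableAt one_ne_zero)))).mul
      (hasDerivAt_primitive_comp_fst hχ hu1)).deriv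
  have hvertical : pdz (verticalFlux χ u) p =
      p.1 * pdz (pdz u) p * primitive χ (u p) + p.1 * pdz u p * (χ (u p) * pdz u p) :=
    (((hasDerivAt_pdz huz).const_mul p.1).mul
      (hasDerivAt_primitive_comp_snd hχ hu1)).deriv
  have hlap : p.1 * (pdr (pdr u) p + pdr ω p + pdz (pdz u) p) + pdr u p + ω p = 0 := by
    unfold cylLap at heq
    field_simp at heq
    linear_combination heq
  rw [hradial, hvertical]
  linear_combination primitive χ (u p) * hlap

end TestFunction

section FirstOrder

variable (hχ : IsCutoff χ) (hu : ∀ p ∈ dyadicRect a h, ContDiffAt ℝ 1 u p)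
include hχ hu

lemma continuousOn_cutoff_comp : ContinuousOn (fun p => χ (u p)) (dyadicRect a h) :=
  hχ.continuous.comp_continuousOn (continuousOn_of_forall_contDiffAt hu)

lemma continuousOn_gradMass_integrand :
    ContinuousOn (fun p => p.1 * (χ (u p) * (|pdr u p| + |pdz u p|))) (dyadicRect a h) :=
  continuousOn_fst.mul ((continuousOn_cutoff_comp hχ hu).mul
    ((continuousOn_pdr hu).abs.add (continuousOn_pdz hu).abs))

lemma continuousOn_energy_integrand :
    ContinuousOn (fun p => p.1 * (χ (u p) * (pdr u p ^ 2 + pdz u p ^ 2))) (dyadicRect a h) :=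
  continuousOn_fst.mul ((continuousOn_cutoff_comp hχ hu).mul
    (((continuousOn_pdr hu).pow 2).add ((continuousOn_pdz hu).pow 2)))

lemma continuousOn_mass_integrand :
    ContinuousOn (fun p => p.1 * χ (u p)) (dyadicRect a h) :=
  continuousOn_fst.mul (continuousOn_cutoff_comp hχ hu)

lemma gradMass_le_energy_add_mass (ha : 0 ≤ a) {t : ℝ} (ht : 0 < t) :
    gradMass χ u a h ≤ t * energy χ u a h + 1 / (2 * t) * mass χ u a h := by
  unfold gradMass energy mass
  rw [← integral_const_mul, ← integral_const_mul,
    ← integral_add (((continuousOn_energy_integrand hχ hu).integrableOn_compact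
      isCompact_dyadicRect).const_mul _) (((continuousOn_mass_integrand hχ hu).integrableOn_compact
      isCompact_dyadicRect).const_mul _)]
  refine setIntegral_mono_of_isCompact isCompact_dyadicRect
    (continuousOn_gradMass_integrand hχ hu)
    ((continuousOn_const.mul (continuousOn_energy_integrand hχ hu)).add
      (continuousOn_const.mul (continuousOn_mass_integrand hχ hu))) fun p hp => ?_
  have young : ∀ x : ℝ, |x| ≤ t * x ^ 2 + 1 / (4 * t) := fun x => by
    rw [← sub_nonneg, ← sq_abs]
    have : t * |x| ^ 2 + 1 / (4 * t) - |x| = (2 * t * |x| - 1) ^ 2 / (4 * t) := by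
      field_simp; ring
    rw [this]; positivity
  have hweight : 0 ≤ p.1 * χ (u p) := mul_nonneg (ha.trans hp.1.1) (hχ.nonneg _)
  calc p.1 * (χ (u p) * (|pdr u p| + |pdz u p|))
      ≤ p.1 * χ (u p) * ((t * pdr u p ^ 2 + 1 / (4 * t)) + (t * pdz u p ^ 2 + 1 / (4 * t))) := by
        rw [← mul_assoc]; gcongr <;> exact young _
    _ = _ := by field_simp; ring

lemma mul_setIntegral_abs_gradient_le :
    a * ((∫ p in dyadicRect a h, |pdr (fun q => primitive χ (u q)) p|) +
      ∫ p in dyadicRect a h, |pdz (fun q => primitive χ (u q)) p|) ≤ gradMass χ u a h := by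
  have hφ : ∀ p ∈ dyadicRect a h, ContDiffAt ℝ 1 (fun q => primitive χ (u q)) p :=
    fun p hp => contDiffAt_primitive_comp hχ.continuous (hu p hp)
  have hr := (continuousOn_pdr hφ).abs
  have hz := (continuousOn_pdz hφ).abs
  rw [← integral_add (hr.integrableOn_compact isCompact_dyadicRect)
    (hz.integrableOn_compact isCompact_dyadicRect), ← integral_const_mul]
  refine setIntegral_mono_of_isCompact isCompact_dyadicRect
    (continuousOn_const.mul (hr.add hz)) (continuousOn_gradMass_integrand hχ hu) fun p hp => ?_
  have hdiff := (hu p hp).differentiableAt one_ne_zero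
  rw [pdr_primitive_comp hχ.continuous hdiff, pdz_primitive_comp hχ.continuous hdiff, abs_mul,
    abs_mul, abs_of_nonneg (hχ.nonneg _), ← mul_add]
  exact mul_le_mul_of_nonneg_right hp.1.1
    (mul_nonneg (hχ.nonneg _) (add_nonneg (abs_nonneg _) (abs_nonneg _)))

lemma mass_le_mul_setIntegral : mass χ u a h ≤ 2 * a * ∫ p in dyadicRect a h, χ (u p) := by
  rw [← integral_const_mul]
  exact setIntegral_mono_of_isCompact isCompact_dyadicRect (continuousOn_mass_integrand hχ hu)
    (continuousOn_const.mul (continuousOn_cutoff_comp hχ hu))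
    fun p hp => mul_le_mul_of_nonneg_right hp.1.2 (hχ.nonneg _)

lemma cutoff_eq_zero_of_mass_eq_zero (ha : 0 < a) (hh : 0 < h) (hmass : mass χ u a h = 0) :
    ∀ p ∈ dyadicRect a h, χ (u p) = 0 := by
  have hcont := continuousOn_mass_integrand hχ hu
  have hnonneg : ∀ p ∈ dyadicRect a h, 0 ≤ p.1 * χ (u p) := fun p hp =>
    mul_nonneg (ha.le.trans hp.1.1) (hχ.nonneg _)
  have hae := (setIntegral_eq_zero_iff_of_nonneg_ae
    ((ae_restrict_iff' isCompact_dyadicRect.measurableSet).2 (.of_forall hnonneg))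
    (hcont.integrableOn_compact isCompact_dyadicRect)).1 hmass
  have hclosure : closure (interior (dyadicRect a h)) = dyadicRect a h := by
    rw [dyadicRect, interior_prod_eq, interior_Icc, interior_Icc, closure_prod_eq,
      closure_Ioo (by linarith), closure_Ioo hh.ne]
  have heq := Measure.eqOn_of_ae_eq hae hcont continuousOn_const hclosure.ge
  exact fun p hp => (mul_eq_zero.1 (heq hp)).resolve_left (ha.trans_le hp.1.1).ne'

lemma pow_mul_setIntegral_cutoff_le {χ' : ℝ → ℝ} (hχ' : IsCutoff χ') {δ : ℝ} (hδ : 0 ≤ δ)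
    (hlevel : ∀ s, χ' s ≠ 0 → δ ≤ primitive χ s) (n : ℕ) :
    δ ^ n * ∫ p in dyadicRect a h, χ' (u p) ≤ ∫ p in dyadicRect a h, primitive χ (u p) ^ n := by
  rw [← integral_const_mul]
  refine setIntegral_mono_of_isCompact isCompact_dyadicRect
    (continuousOn_const.mul (continuousOn_cutoff_comp hχ' hu))
    ((continuousOn_of_forall_contDiffAt fun p hp =>
      contDiffAt_primitive_comp hχ.continuous (hu p hp)).pow n) fun p _ => ?_
  rcases eq_or_ne (χ' (u p)) 0 with h0 | h0
  · simpa only [h0, mul_zero] using pow_nonneg (hχ.primitive_nonneg (u p)) n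
  · exact (mul_le_of_le_one_right (pow_nonneg hδ n) (hχ'.le_one _)).trans
      (pow_le_pow_left₀ hδ (hlevel _ h0) n)

variable (ha : 0 ≤ a) (hh : 0 ≤ h) (hha : h ≤ 2 * a)
  (hbot : ∀ r ∈ Icc a (2 * a), u (r, 0) = 0)
include ha hh hha hbot

omit ha in
lemma setIntegral_primitive_le :
    ∫ p in dyadicRect a h, primitive χ (u p) ≤
      2 * a * ∫ p in dyadicRect a h, |pdz (fun q => primitive χ (u q)) p| := by
  have hpoincare := setIntegral_le_mul_setIntegral_abs_pdz
    (fun p hp => contDiffAt_primitive_comp hχ.continuous (hu p hp)) hh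
    fun r hr => by rw [hbot r hr, primitive_zero]
  rw [sub_zero] at hpoincare
  exact hpoincare.trans (mul_le_mul_of_nonneg_right hha
    (integral_nonneg fun _ => abs_nonneg _))

lemma setIntegral_primitive_add_le :
    ∫ p in dyadicRect a h,
      (primitive χ (u p) + (2 * a - a) * |pdr (fun q => primitive χ (u q)) p|) ≤
        2 * gradMass χ u a h := by
  have hφ : ∀ p ∈ dyadicRect a h, ContDiffAt ℝ 1 (fun q => primitive χ (u q)) p :=
    fun p hp => contDiffAt_primitive_comp hχ.continuous (hu p hp)
  rw [integral_add ((continuousOn_of_forall_contDiffAt hφ).integrableOn_compact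
    isCompact_dyadicRect) (((continuousOn_pdr hφ).abs.integrableOn_compact
    isCompact_dyadicRect).const_mul _), integral_const_mul]
  have hgrad := mul_setIntegral_abs_gradient_le hχ hu
  have hpoincare := setIntegral_primitive_le hχ hu hh hha hbot
  have hr : 0 ≤ a * ∫ p in dyadicRect a h, |pdr (fun q => primitive χ (u q)) p| :=
    mul_nonneg ha (integral_nonneg fun _ => abs_nonneg _)
  linarith

lemma mul_setIntegral_primitive_vertical_le {r : ℝ} (hr : r ∈ Icc a (2 * a)) :
    a * ∫ y in Icc 0 h, primitive χ (u (r, y)) ≤ 2 * gradMass χ u a h := by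
  have htrace := mul_setIntegral_vertical_le
    (fun p hp => contDiffAt_primitive_comp hχ.continuous (hu p hp)) hr
  calc a * ∫ y in Icc 0 h, primitive χ (u (r, y))
      = (2 * a - a) * ∫ y in Icc 0 h, primitive χ (u (r, y)) := by ring
    _ ≤ _ := htrace
    _ ≤ _ := setIntegral_primitive_add_le hχ hu ha hh hha hbot

lemma setIntegral_primitive_le_gradMass :
    ∫ p in dyadicRect a h, primitive χ (u p) ≤ 2 * gradMass χ u a h := by
  have hr : 0 ≤ a * ∫ p in dyadicRect a h, |pdr (fun q => primitive χ (u q)) p| :=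
    mul_nonneg ha (integral_nonneg fun _ => abs_nonneg _)
  linarith [setIntegral_primitive_le hχ hu hh hha hbot, mul_setIntegral_abs_gradient_le hχ hu]

lemma sq_mul_setIntegral_primitive_sq_le :
    a ^ 2 * ∫ p in dyadicRect a h, primitive χ (u p) ^ 2 ≤ 2 * gradMass χ u a h ^ 2 := by
  set P := ∫ p in dyadicRect a h, |pdr (fun q => primitive χ (u q)) p|
  set Q := ∫ p in dyadicRect a h, |pdz (fun q => primitive χ (u q)) p|
  set X := gradMass χ u a h
  have hP : 0 ≤ P := integral_nonneg fun _ => abs_nonneg _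
  have hQ : 0 ≤ Q := integral_nonneg fun _ => abs_nonneg _
  have hgrad : a * (P + Q) ≤ X := mul_setIntegral_abs_gradient_le hχ hu
  have hX : 0 ≤ X := (mul_nonneg ha (add_nonneg hP hQ)).trans hgrad
  have hlady : (2 * a - a) * ∫ p in dyadicRect a h, primitive χ (u p) ^ 2 ≤ Q * (2 * X) :=
    (mul_setIntegral_sq_le (fun p hp => contDiffAt_primitive_comp hχ.continuous (hu p hp))
      (fun p _ => hχ.primitive_nonneg (u p)) fun r hr => by rw [hbot r hr, primitive_zero]).trans
      (mul_le_mul_of_nonneg_left (setIntegral_primitive_add_le hχ hu ha hh hha hbot) hQ)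
  calc a ^ 2 * ∫ p in dyadicRect a h, primitive χ (u p) ^ 2
      = a * ((2 * a - a) * ∫ p in dyadicRect a h, primitive χ (u p) ^ 2) := by ring
    _ ≤ a * (Q * (2 * X)) := mul_le_mul_of_nonneg_left hlady ha
    _ = a * Q * (2 * X) := by ring
    _ ≤ X * (2 * X) :=
        mul_le_mul_of_nonneg_right (by linarith [mul_nonneg ha hP]) (by positivity)
    _ = 2 * X ^ 2 := by ring

/- With `I = ∫ χ'(u)`, the weight gives `mass ≤ 2 a I`, while `δ I ≤ ∫ Φ(u)` and
`δ² I ≤ ∫ Φ(u)²` are controlled by the Poincaré and Ladyzhenskaya inequalities. -/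
lemma mass_sq_mul_le {χ' : ℝ → ℝ} (hχ' : IsCutoff χ') {δ : ℝ} (hδ : 0 ≤ δ)
    (hlevel : ∀ s, χ' s ≠ 0 → δ ≤ primitive χ s) :
    mass χ' u a h ^ 2 * δ ^ 3 ≤ 16 * gradMass χ u a h ^ 3 := by
  set I := ∫ p in dyadicRect a h, χ' (u p)
  set X := gradMass χ u a h
  have hI : 0 ≤ I := integral_nonneg fun p => hχ'.nonneg _
  have hmass_nonneg : 0 ≤ mass χ' u a h := mass_nonneg hχ'.nonneg ha
  have hmass : mass χ' u a h ≤ 2 * a * I := mass_le_mul_setIntegral hχ' hu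
  have hlinear : δ * I ≤ 2 * X := by
    have hpow := pow_mul_setIntegral_cutoff_le hχ hu hχ' hδ hlevel 1
    simp only [pow_one] at hpow
    exact hpow.trans (setIntegral_primitive_le_gradMass hχ hu ha hh hha hbot)
  have hquadratic : a ^ 2 * (δ ^ 2 * I) ≤ 2 * X ^ 2 :=
    (mul_le_mul_of_nonneg_left (pow_mul_setIntegral_cutoff_le hχ hu hχ' hδ hlevel 2)
      (sq_nonneg a)).trans (sq_mul_setIntegral_primitive_sq_le hχ hu ha hh hha hbot)
  calc mass χ' u a h ^ 2 * δ ^ 3 ≤ (2 * a * I) ^ 2 * δ ^ 3 := by gcongr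
    _ = 4 * ((a ^ 2 * (δ ^ 2 * I)) * (δ * I)) := by ring
    _ ≤ 4 * ((2 * X ^ 2) * (2 * X)) := by gcongr
    _ = 16 * X ^ 3 := by ring

end FirstOrder

section Green

variable (hχ : IsCutoff χ)
include hχ

lemma energy_add_setIntegral_eq_boundary (ha : 0 < a) (hh : 0 ≤ h)
    (hu : ∀ p ∈ dyadicRect a h, ContDiffAt ℝ 2 u p)
    (hω : ∀ p ∈ dyadicRect a h, ContDiffAt ℝ 1 ω p)
    (heq : ∀ p ∈ dyadicRect a h, cylLap u p = -(pdr ω p + ω p / p.1))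
    (hbot : ∀ r ∈ Icc a (2 * a), u (r, 0) = 0) (htop : ∀ r ∈ Icc a (2 * a), u (r, h) = 0) :
    energy χ u a h + ∫ p in dyadicRect a h, ω p * (p.1 * (χ (u p) * pdr u p)) =
      (∫ y in 0..h, radialFlux χ u ω (2 * a, y)) - ∫ y in 0..h, radialFlux χ u ω (a, y) := by
  have hu1 : ∀ p ∈ dyadicRect a h, ContDiffAt ℝ 1 u p := fun p hp => (hu p hp).of_le one_le_two
  have hcross : ContinuousOn (fun p => ω p * (p.1 * (χ (u p) * pdr u p))) (dyadicRect a h) :=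
    (continuousOn_of_forall_contDiffAt hω).mul
      (continuousOn_fst.mul ((continuousOn_cutoff_comp hχ hu1).mul (continuousOn_pdr hu1)))
  have hhorizontal : ∀ c, (∀ r ∈ Icc a (2 * a), u (r, c) = 0) →
      ∫ r in a..(2 * a), verticalFlux χ u (r, c) = 0 := fun c hc => by
    rw [← intervalIntegral.integral_zero (a := a) (b := 2 * a) (E := ℝ)]
    refine intervalIntegral.integral_congr fun r hr => ?_
    rw [uIcc_of_le (by linarith)] at hr
    simp only [verticalFlux, hc r hr, primitive_zero, mul_zero]
  calc energy χ u a h + ∫ p in dyadicRect a h, ω p * (p.1 * (χ (u p) * pdr u p))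
      = ∫ p in dyadicRect a h, (p.1 * (χ (u p) * (pdr u p ^ 2 + pdz u p ^ 2)) +
          ω p * (p.1 * (χ (u p) * pdr u p))) :=
        (integral_add ((continuousOn_energy_integrand hχ hu1).integrableOn_compact
          isCompact_dyadicRect) (hcross.integrableOn_compact isCompact_dyadicRect)).symm
    _ = ∫ p in dyadicRect a h, (pdr (radialFlux χ u ω) p + pdz (verticalFlux χ u) p) :=
        setIntegral_congr_fun isCompact_dyadicRect.measurableSet fun p hp =>
          (pdr_radialFlux_add_pdz_verticalFlux hχ.continuous (ha.trans_le hp.1.1).ne'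
            (hu p hp) (hω p hp) (heq p hp)).symm
    _ = _ := setIntegral_pdr_add_pdz (by linarith) hh
        (fun p hp => contDiffAt_radialFlux hχ.continuous (hu p hp) (hω p hp))
        (fun p hp => contDiffAt_verticalFlux hχ.continuous (hu p hp))
    _ = _ := by rw [hhorizontal h htop, hhorizontal 0 hbot, sub_zero, zero_add]

variable {L : ℝ} (hωL : ∀ p ∈ dyadicRect a h, |ω p| ≤ L)
include hωL

lemma neg_setIntegral_mul_le_mul_gradMass (ha : 0 ≤ a)
    (hu : ∀ p ∈ dyadicRect a h, ContDiffAt ℝ 1 u p) (hω : ContinuousOn ω (dyadicRect a h)) :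
    -∫ p in dyadicRect a h, ω p * (p.1 * (χ (u p) * pdr u p)) ≤ L * gradMass χ u a h := by
  unfold gradMass
  rw [← integral_neg, ← integral_const_mul]
  refine setIntegral_mono_of_isCompact isCompact_dyadicRect (hω.mul (continuousOn_fst.mul
    ((continuousOn_cutoff_comp hχ hu).mul (continuousOn_pdr hu)))).neg
    (continuousOn_const.mul (continuousOn_gradMass_integrand hχ hu)) fun p hp => ?_
  have hweight : 0 ≤ p.1 * χ (u p) := mul_nonneg (ha.trans hp.1.1) (hχ.nonneg _)
  have hL : 0 ≤ L := (abs_nonneg _).trans (hωL p hp)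
  calc -(ω p * (p.1 * (χ (u p) * pdr u p))) = -(ω p * pdr u p) * (p.1 * χ (u p)) := by ring
    _ ≤ L * |pdr u p| * (p.1 * χ (u p)) := by
        gcongr
        exact (neg_le_abs _).trans
          ((abs_mul _ _).trans_le (mul_le_mul_of_nonneg_right (hωL p hp) (abs_nonneg _)))
    _ ≤ L * (|pdr u p| + |pdz u p|) * (p.1 * χ (u p)) := by
        gcongr
        exact le_add_of_nonneg_right (abs_nonneg _)
    _ = L * (p.1 * (χ (u p) * (|pdr u p| + |pdz u p|))) := by ring

lemma abs_integral_radialFlux_le_of_pdr_eq_zero (ha : 0 ≤ a) (hh : 0 ≤ h)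
    (hu : ∀ p ∈ dyadicRect a h, ContDiffAt ℝ 1 u p) (hha : h ≤ 2 * a)
    (hbot : ∀ r ∈ Icc a (2 * a), u (r, 0) = 0) {r c : ℝ} (hr : r ∈ Icc a (2 * a)) (hc : 0 ≤ c)
    (hch : c ≤ h) (hneumann : ∀ y ∈ Icc c h, pdr u (r, y) = 0) :
    |∫ y in c..h, radialFlux χ u ω (r, y)| ≤ 4 * L * gradMass χ u a h := by
  have hL : 0 ≤ L := (abs_nonneg _).trans (hωL (r, 0) ⟨hr, left_mem_Icc.2 hh⟩)
  have hφ : ContinuousOn (fun y => primitive χ (u (r, y))) (Icc 0 h) :=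
    (continuousOn_of_forall_contDiffAt fun p hp =>
      contDiffAt_primitive_comp hχ.continuous (hu p hp)).comp
      (Continuous.continuousOn (by fun_prop)) fun y hy => ⟨hr, hy⟩
  have hsub : Icc c h ⊆ Icc 0 h := Icc_subset_Icc_left hc
  have hflux : ∀ y ∈ Icc c h,
      |radialFlux χ u ω (r, y)| ≤ 2 * a * L * primitive χ (u (r, y)) := fun y hy => by
    have hr0 : 0 ≤ r := ha.trans hr.1
    rw [radialFlux, hneumann y hy, zero_add, abs_mul, abs_mul, abs_of_nonneg hr0,
      abs_of_nonneg (hχ.primitive_nonneg _)]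
    have := hχ.primitive_nonneg (u (r, y))
    gcongr
    · exact hr.2
    · exact hωL _ ⟨hr, hsub hy⟩
  calc |∫ y in c..h, radialFlux χ u ω (r, y)|
      ≤ ∫ y in c..h, 2 * a * L * primitive χ (u (r, y)) :=
        (Real.norm_eq_abs _).symm.trans_le <| intervalIntegral.norm_integral_le_of_norm_le hch
          (.of_forall fun y hy => hflux y (Ioc_subset_Icc_self hy))
          ((hφ.mono (uIcc_of_le hch ▸ hsub)).intervalIntegrable.const_mul _)
    _ = 2 * L * (a * ∫ y in Icc c h, primitive χ (u (r, y))) := by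
        rw [intervalIntegral.integral_const_mul, intervalIntegral.integral_of_le hch,
          ← integral_Icc_eq_integral_Ioc]
        ring
    _ ≤ 2 * L * (a * ∫ y in Icc 0 h, primitive χ (u (r, y))) := by
        refine mul_le_mul_of_nonneg_left (mul_le_mul_of_nonneg_left ?_ ha) (by positivity)
        exact setIntegral_mono_set (hφ.integrableOn_compact isCompact_Icc)
          (.of_forall fun y => hχ.primitive_nonneg _) hsub.eventuallyLE
    _ ≤ 2 * L * (2 * gradMass χ u a h) := by
        refine mul_le_mul_of_nonneg_left ?_ (by positivity)
        exact mul_setIntegral_primitive_vertical_le hχ hu ha hh hha hbot hr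
    _ = 4 * L * gradMass χ u a h := by ring

lemma abs_integral_sub_integral_radialFlux_le (ha : 0 ≤ a) (hh : 0 ≤ h)
    (hu : ∀ p ∈ dyadicRect a h, ContDiffAt ℝ 2 u p)
    (hω : ∀ p ∈ dyadicRect a h, ContDiffAt ℝ 1 ω p) (hha : h ≤ 2 * a)
    (hbot : ∀ r ∈ Icc a (2 * a), u (r, 0) = 0) {r c : ℝ} (hr : r ∈ Icc a (2 * a)) (hc : 0 ≤ c)
    (hch : c ≤ h) (hneumann : ∀ y ∈ Icc c h, pdr u (r, y) = 0) :
    |(∫ y in 0..h, radialFlux χ u ω (r, y)) - ∫ y in 0..c, radialFlux χ u ω (r, y)| ≤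
      4 * L * gradMass χ u a h := by
  have hflux : ContinuousOn (fun y => radialFlux χ u ω (r, y)) (Icc 0 h) :=
    (continuousOn_of_forall_contDiffAt fun p hp =>
      contDiffAt_radialFlux hχ.continuous (hu p hp) (hω p hp)).comp
      (Continuous.continuousOn (by fun_prop)) fun y hy => ⟨hr, hy⟩
  have hint : ∀ d ∈ Icc 0 h, IntervalIntegrable (fun y => radialFlux χ u ω (r, y)) volume 0 d :=
    fun d hd => (hflux.mono
      (uIcc_of_le hd.1 ▸ Icc_subset_Icc_right hd.2)).intervalIntegrable
  rw [intervalIntegral.integral_interval_sub_left (hint h ⟨hh, le_rfl⟩) (hint c ⟨hc, hch⟩)]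
  exact abs_integral_radialFlux_le_of_pdr_eq_zero hχ hωL ha hh
    (fun p hp => (hu p hp).of_le one_le_two) hha hbot hr hc hch hneumann

end Green

end DyadicRectangle

section Geometry

variable {β : ℝ} {m i : ℕ}

lemma rW_pos (i : ℕ) : 0 < rW i := Real.rpow_pos_of_pos two_pos _

lemma rW_zero : rW 0 = 1 := by simp [rW]

lemma two_mul_rW_succ (i : ℕ) : 2 * rW (i + 1) = rW i := by
  have hexp : -(i : ℝ) = -((i + 1 : ℕ) : ℝ) + 1 := by push_cast; ring
  rw [rW, rW, hexp, Real.rpow_add two_pos, Real.rpow_one, mul_comm]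

lemma antitone_rW : Antitone rW :=
  antitone_nat_of_succ_le fun i => by linarith [two_mul_rW_succ i, rW_pos (i + 1)]

lemma rW_le_one (i : ℕ) : rW i ≤ 1 := rW_zero ▸ antitone_rW i.zero_le

lemma sum_rW_succ_le_one (m : ℕ) : ∑ i ∈ Finset.range m, rW (i + 1) ≤ 1 := by
  have htelescope : ∀ i, rW (i + 1) = rW i - rW (i + 1) := fun i => by
    linarith [two_mul_rW_succ i]
  rw [Finset.sum_congr rfl fun i _ => htelescope i, Finset.sum_range_sub', rW_zero]
  linarith [rW_pos m]

lemma hH_pos (β : ℝ) (i : ℕ) : 0 < hH β i := Real.rpow_pos_of_pos two_pos _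

lemma hH_one (β : ℝ) : hH β 1 = 1 := by simp [hH]

lemma antitone_hH (hβ : 0 ≤ β) : Antitone (hH β) := fun i j hij =>
  Real.rpow_le_rpow_of_exponent_le one_le_two (by
    have : (i : ℝ) ≤ j := by exact_mod_cast hij
    nlinarith)

lemma hH_succ_le_rW (hβ : 1 ≤ β) (i : ℕ) : hH β (i + 1) ≤ rW i :=
  Real.rpow_le_rpow_of_exponent_le one_le_two (by
    push_cast
    nlinarith [(Nat.cast_nonneg i : (0 : ℝ) ≤ i)])

/-- The `i`-th cell, counted from `0`: the closure of the rectangle `S_{i+1}`. -/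
def cell (β : ℝ) (i : ℕ) : Set (ℝ × ℝ) := dyadicRect (rW (i + 1)) (hH β (i + 1))

lemma Srect_succ_eq (β : ℝ) (i : ℕ) :
    Srect β (i + 1) = Ico (rW (i + 1)) (2 * rW (i + 1)) ×ˢ Ioo 0 (hH β (i + 1)) := by
  ext p
  simp only [Srect, Nat.add_sub_cancel, two_mul_rW_succ, mem_ofPred_eq, mem_prod, mem_Ico, mem_Ioo,
    and_assoc]

lemma closure_Srect_succ (β : ℝ) (i : ℕ) : closure (Srect β (i + 1)) = cell β i := by
  rw [Srect_succ_eq, closure_prod_eq, closure_Ico (by linarith [rW_pos (i + 1)]),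
    closure_Ioo (hH_pos β _).ne]
  rfl

lemma mem_Ddom_iff {p : ℝ × ℝ} : p ∈ Ddom β m ↔ ∃ i < m, p ∈ Srect β (i + 1) := by
  simp only [Ddom, mem_iUnion, Finset.mem_Icc, exists_prop]
  constructor
  · rintro ⟨j, ⟨hj, hjm⟩, hp⟩
    exact ⟨j - 1, by omega, by rwa [Nat.sub_add_cancel hj]⟩
  · rintro ⟨i, hi, hp⟩
    exact ⟨i + 1, ⟨by omega, by omega⟩, hp⟩

lemma Srect_succ_subset_Ddom (hi : i < m) : Srect β (i + 1) ⊆ Ddom β m :=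
  fun _ hp => mem_Ddom_iff.2 ⟨i, hi, hp⟩

lemma measurableSet_Srect_succ (β : ℝ) (i : ℕ) : MeasurableSet (Srect β (i + 1)) :=
  Srect_succ_eq β i ▸ measurableSet_Ico.prod measurableSet_Ioo

lemma volume_real_Srect_succ (β : ℝ) (i : ℕ) :
    volume.real (Srect β (i + 1)) = rW (i + 1) * hH β (i + 1) := by
  rw [Srect_succ_eq, Measure.volume_eq_prod, measureReal_prod_prod,
    Real.volume_real_Ico_of_le (by linarith [rW_pos (i + 1)]),
    Real.volume_real_Ioo_of_le (hH_pos β _).le]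
  ring

lemma measurableSet_Ddom : MeasurableSet (Ddom β m) := by
  have hunion : Ddom β m = ⋃ i ∈ Finset.range m, Srect β (i + 1) := by
    ext p
    simp only [mem_Ddom_iff, mem_iUnion, Finset.mem_range, exists_prop]
  exact hunion ▸ Finset.measurableSet_biUnion _ fun i _ => measurableSet_Srect_succ β i

lemma cell_subset_closure_Ddom (hi : i < m) : cell β i ⊆ closure (Ddom β m) :=
  closure_Srect_succ β i ▸ closure_mono (Srect_succ_subset_Ddom hi)

lemma mem_bdH_bottom (hi : i < m) {r : ℝ} (hr : r ∈ Icc (rW (i + 1)) (2 * rW (i + 1))) :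
    (r, 0) ∈ bdH β m :=
  Or.inl ⟨rfl, (antitone_rW hi).trans hr.1,
    hr.2.trans ((two_mul_rW_succ i).trans_le (rW_le_one i))⟩

lemma mem_bdH_top (hi : i < m) {r : ℝ} (hr : r ∈ Icc (rW (i + 1)) (2 * rW (i + 1))) :
    (r, hH β (i + 1)) ∈ bdH β m :=
  Or.inr <| mem_biUnion (x := i + 1) (Finset.mem_Icc.2 ⟨by omega, hi⟩)
    ⟨rfl, hr.1, hr.2.trans_eq (two_mul_rW_succ i)⟩

lemma isCompact_closure_Ddom (hβ : 0 ≤ β) : IsCompact (closure (Ddom β m)) := by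
  refine ((isCompact_Icc.prod isCompact_Icc).isBounded.subset
    (t := Icc (0 : ℝ) 1 ×ˢ Icc (0 : ℝ) 1) fun p hp => ?_).isCompact_closure
  obtain ⟨i, -, hr, hr', hz, hz'⟩ := mem_Ddom_iff.1 hp
  exact ⟨⟨(rW_pos _).le.trans hr, hr'.le.trans (rW_le_one _)⟩, hz.le,
    hz'.le.trans ((antitone_hH hβ (Nat.le_add_left 1 i)).trans_eq (hH_one β))⟩

/-- The height of the opening in `D_m` across the line `r = r_i`: that of the lower of the two
adjacent cells for an interior line, and `0` for the two ends `i = 0` and `i = m`. -/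
def interfaceHeight (β : ℝ) (m i : ℕ) : ℝ := if i = 0 ∨ m ≤ i then 0 else hH β (i + 1)

lemma interfaceHeight_nonneg : 0 ≤ interfaceHeight β m i := by
  unfold interfaceHeight
  split_ifs
  exacts [le_rfl, (hH_pos β _).le]

lemma interfaceHeight_le_hH_succ : interfaceHeight β m i ≤ hH β (i + 1) := by
  unfold interfaceHeight
  split_ifs
  exacts [(hH_pos β _).le, le_rfl]

lemma mem_bdV_left (hi : i < m) {y : ℝ}
    (hy : y ∈ Icc (interfaceHeight β m (i + 1)) (hH β (i + 1))) : (rW (i + 1), y) ∈ bdV β m := by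
  rcases (Nat.succ_le_of_lt hi).eq_or_lt with rfl | him
  · exact Or.inl (Or.inr ⟨rfl, interfaceHeight_nonneg.trans hy.1, hy.2⟩)
  · rw [interfaceHeight, if_neg (by omega)] at hy
    exact Or.inr <| mem_biUnion (x := i + 1) (Finset.mem_Icc.2 ⟨by omega, by omega⟩) ⟨rfl, hy⟩

lemma mem_bdV_right (hβ : 0 ≤ β) (hi : i < m) {y : ℝ}
    (hy : y ∈ Icc (interfaceHeight β m i) (hH β (i + 1))) : (rW i, y) ∈ bdV β m := by
  rcases Nat.eq_zero_or_pos i with rfl | hpos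
  · exact Or.inl (Or.inl ⟨rW_zero, interfaceHeight_nonneg.trans hy.1, hy.2.trans_eq (hH_one β)⟩)
  · rw [interfaceHeight, if_neg (by omega)] at hy
    exact Or.inr <| mem_biUnion (x := i) (Finset.mem_Icc.2 ⟨hpos, by omega⟩)
      ⟨rfl, hy.1, hy.2.trans (antitone_hH hβ i.le_succ)⟩

end Geometry

/-- `u` solves `Δ u = -(∂_r ω + ω / r)` in `D_m` with `u = 0` on the horizontal and `∂_r u = 0` on
the vertical part of the boundary. The regularity of `u` and `ω` is that of functions defined near
each point of the closure of `D_m`. -/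
structure IsMixedSolution (β : ℝ) (m : ℕ) (u ω : ℝ × ℝ → ℝ) : Prop where
  contDiffAt : ∀ p ∈ closure (Ddom β m), ContDiffAt ℝ 2 u p
  contDiffAt_source : ∀ p ∈ closure (Ddom β m), ContDiffAt ℝ 1 ω p
  cylLap_eq : ∀ p ∈ Ddom β m, cylLap u p = -(pdr ω p + ω p / p.1)
  eq_zero : ∀ p ∈ bdH β m, u p = 0
  pdr_eq_zero : ∀ p ∈ bdV β m, pdr u p = 0

section MixedSolution

/-- The sum of `gradMass χ u` over the cells of `D_m`. -/
def totalGradMass (χ : ℝ → ℝ) (u : ℝ × ℝ → ℝ) (β : ℝ) (m : ℕ) : ℝ :=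
  ∑ i ∈ Finset.range m, gradMass χ u (rW (i + 1)) (hH β (i + 1))

/-- The sum of `mass χ u` over the cells of `D_m`. -/
def totalMass (χ : ℝ → ℝ) (u : ℝ × ℝ → ℝ) (β : ℝ) (m : ℕ) : ℝ :=
  ∑ i ∈ Finset.range m, mass χ u (rW (i + 1)) (hH β (i + 1))

variable {β L : ℝ} {m i : ℕ} {u ω : ℝ × ℝ → ℝ} {χ : ℝ → ℝ}

lemma totalGradMass_nonneg (hχ : ∀ s, 0 ≤ χ s) : 0 ≤ totalGradMass χ u β m :=
  Finset.sum_nonneg fun _ _ => gradMass_nonneg hχ (rW_pos _).le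

lemma totalMass_nonneg (hχ : ∀ s, 0 ≤ χ s) : 0 ≤ totalMass χ u β m :=
  Finset.sum_nonneg fun _ _ => mass_nonneg hχ (rW_pos _).le

namespace IsMixedSolution

lemma neg (h : IsMixedSolution β m u ω) :
    IsMixedSolution β m (fun q => -u q) fun q => -ω q where
  contDiffAt p hp := (h.contDiffAt p hp).neg
  contDiffAt_source p hp := (h.contDiffAt_source p hp).neg
  cylLap_eq p hp := by
    have hpdr : pdr (fun q => -u q) = fun q => -pdr u q := funext fun _ => pdr_neg
    have hpdz : pdz (fun q => -u q) = fun q => -pdz u q := funext fun _ => pdz_neg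
    have heq := h.cylLap_eq p hp
    unfold cylLap at heq ⊢
    rw [hpdr, hpdz, pdr_neg, pdz_neg, pdr_neg]
    linear_combination -heq
  eq_zero p hp := by rw [h.eq_zero p hp, neg_zero]
  pdr_eq_zero p hp := by rw [pdr_neg, h.pdr_eq_zero p hp, neg_zero]

lemma contDiffAt_cell (h : IsMixedSolution β m u ω) (hi : i < m) :
    ∀ p ∈ cell β i, ContDiffAt ℝ 2 u p :=
  fun p hp => h.contDiffAt p (cell_subset_closure_Ddom hi hp)

lemma contDiffAt_one_cell (h : IsMixedSolution β m u ω) (hi : i < m) :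
    ∀ p ∈ cell β i, ContDiffAt ℝ 1 u p :=
  fun p hp => (h.contDiffAt_cell hi p hp).of_le one_le_two

lemma contDiffAt_source_cell (h : IsMixedSolution β m u ω) (hi : i < m) :
    ∀ p ∈ cell β i, ContDiffAt ℝ 1 ω p :=
  fun p hp => h.contDiffAt_source p (cell_subset_closure_Ddom hi hp)

lemma eq_zero_bottom (h : IsMixedSolution β m u ω) (hi : i < m) :
    ∀ r ∈ Icc (rW (i + 1)) (2 * rW (i + 1)), u (r, 0) = 0 :=
  fun _ hr => h.eq_zero _ (mem_bdH_bottom hi hr)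

lemma cylLap_eq_cell (h : IsMixedSolution β m u ω) (hi : i < m) :
    ∀ p ∈ cell β i, cylLap u p = -(pdr ω p + ω p / p.1) := by
  have hne : ∀ p ∈ cell β i, p.1 ≠ 0 := fun p hp => ((rW_pos (i + 1)).trans_le hp.1.1).ne'
  have hur : ∀ p ∈ cell β i, ContDiffAt ℝ 1 (pdr u) p := fun p hp =>
    contDiffAt_pdr (h.contDiffAt_cell hi p hp) one_add_one_eq_two.le
  have huz : ∀ p ∈ cell β i, ContDiffAt ℝ 1 (pdz u) p := fun p hp =>
    contDiffAt_pdz (h.contDiffAt_cell hi p hp) one_add_one_eq_two.le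
  have hω := h.contDiffAt_source_cell hi
  refine EqOn.of_subset_closure (s := Srect β (i + 1))
    (fun p hp => h.cylLap_eq p (Srect_succ_subset_Ddom hi hp)) ?_ ?_
    (closure_Srect_succ β i ▸ subset_closure) (closure_Srect_succ β i).ge
  · exact ((continuousOn_pdr hur).add ((continuousOn_const.div continuousOn_fst hne).mul
      (continuousOn_of_forall_contDiffAt hur))).add (continuousOn_pdz huz)
  · exact ((continuousOn_pdr hω).add
      ((continuousOn_of_forall_contDiffAt hω).div continuousOn_fst hne)).neg

lemma abs_source_le_cell (h : IsMixedSolution β m u ω) (hω : ∀ p ∈ Ddom β m, |ω p| ≤ L)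
    (hi : i < m) : ∀ p ∈ cell β i, |ω p| ≤ L := fun _ hp =>
  le_on_closure hω (continuousOn_of_forall_contDiffAt h.contDiffAt_source).abs continuousOn_const
    (cell_subset_closure_Ddom hi hp)

/- The Neumann part of the vertical sides only contributes the source term to the flux; what is left
is the difference of the fluxes through the two openings. -/
lemma energy_cell_le (h : IsMixedSolution β m u ω) (hβ : 1 ≤ β) (hχ : IsCutoff χ)
    (hω : ∀ p ∈ Ddom β m, |ω p| ≤ L) (hi : i < m) :
    energy χ u (rW (i + 1)) (hH β (i + 1)) ≤
      (∫ y in 0..interfaceHeight β m i, radialFlux χ u ω (rW i, y)) -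
      (∫ y in 0..interfaceHeight β m (i + 1), radialFlux χ u ω (rW (i + 1), y)) +
      9 * L * gradMass χ u (rW (i + 1)) (hH β (i + 1)) := by
  have hu := h.contDiffAt_cell hi
  have hω' := h.contDiffAt_source_cell hi
  have hωL := h.abs_source_le_cell hω hi
  have hbot := h.eq_zero_bottom hi
  have ha := rW_pos (i + 1)
  have hh := (hH_pos β (i + 1)).le
  have hha : hH β (i + 1) ≤ 2 * rW (i + 1) := two_mul_rW_succ i ▸ hH_succ_le_rW hβ i
  have hβ0 : 0 ≤ β := zero_le_one.trans hβ
  have hgreen := energy_add_setIntegral_eq_boundary hχ ha hh hu hω' (h.cylLap_eq_cell hi) hbot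
    fun r hr => h.eq_zero _ (mem_bdH_top hi hr)
  have hsource := neg_setIntegral_mul_le_mul_gradMass hχ hωL ha.le (h.contDiffAt_one_cell hi)
    (continuousOn_of_forall_contDiffAt hω')
  have hleft := abs_le.1 <| abs_integral_sub_integral_radialFlux_le hχ hωL ha.le hh hu hω' hha
    hbot (r := rW (i + 1)) ⟨le_rfl, by linarith⟩ interfaceHeight_nonneg
    (interfaceHeight_le_hH_succ.trans (antitone_hH hβ0 (i + 1).le_succ))
    fun y hy => h.pdr_eq_zero _ (mem_bdV_left hi hy)
  have hright := abs_le.1 <| abs_integral_sub_integral_radialFlux_le hχ hωL ha.le hh hu hω' hha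
    hbot (r := rW i) ⟨by linarith [two_mul_rW_succ i], (two_mul_rW_succ i).ge⟩
    interfaceHeight_nonneg interfaceHeight_le_hH_succ
    fun y hy => h.pdr_eq_zero _ (mem_bdV_right hβ0 hi hy)
  rw [two_mul_rW_succ] at hgreen
  linarith [hleft.1, hright.2]

lemma sum_energy_le (h : IsMixedSolution β m u ω) (hβ : 1 ≤ β) (hχ : IsCutoff χ)
    (hω : ∀ p ∈ Ddom β m, |ω p| ≤ L) :
    ∑ i ∈ Finset.range m, energy χ u (rW (i + 1)) (hH β (i + 1)) ≤
      9 * L * totalGradMass χ u β m := by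
  refine (Finset.sum_le_sum fun i hi =>
    h.energy_cell_le hβ hχ hω (Finset.mem_range.1 hi)).trans_eq ?_
  rw [Finset.sum_add_distrib, Finset.sum_range_sub', totalGradMass, Finset.mul_sum]
  simp [interfaceHeight]

lemma totalGradMass_le (h : IsMixedSolution β m u ω) (hβ : 1 ≤ β) (hχ : IsCutoff χ) (hL : 0 < L)
    (hω : ∀ p ∈ Ddom β m, |ω p| ≤ L) : totalGradMass χ u β m ≤ 18 * L * totalMass χ u β m := by
  have hyoung : totalGradMass χ u β m ≤
      1 / (18 * L) * ∑ i ∈ Finset.range m, energy χ u (rW (i + 1)) (hH β (i + 1)) +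
        9 * L * totalMass χ u β m := by
    rw [totalGradMass, totalMass, Finset.mul_sum, Finset.mul_sum, ← Finset.sum_add_distrib]
    refine Finset.sum_le_sum fun i hi => (gradMass_le_energy_add_mass hχ
      (h.contDiffAt_one_cell (Finset.mem_range.1 hi)) (rW_pos _).le
      (t := 1 / (18 * L)) (by positivity)).trans_eq ?_
    field_simp
    ring
  have habsorb : 1 / (18 * L) * ∑ i ∈ Finset.range m, energy χ u (rW (i + 1)) (hH β (i + 1)) ≤
      1 / 2 * totalGradMass χ u β m := by
    refine (mul_le_mul_of_nonneg_left (h.sum_energy_le hβ hχ hω) (by positivity)).trans_eq ?_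
    field_simp
    ring
  linarith

lemma totalMass_sq_mul_le (h : IsMixedSolution β m u ω) (hβ : 1 ≤ β) (hχ : IsCutoff χ)
    {χ' : ℝ → ℝ} (hχ' : IsCutoff χ') {δ : ℝ} (hδ : 0 < δ)
    (hlevel : ∀ s, χ' s ≠ 0 → δ ≤ primitive χ s) :
    totalMass χ' u β m ^ 2 * δ ^ 3 ≤ 16 * totalGradMass χ u β m ^ 3 := by
  have hsum : totalMass χ' u β m ^ 2 ≤ 16 / δ ^ 3 * totalGradMass χ u β m ^ 3 := by
    refine sum_sq_le_mul_sum_pow_three (by positivity)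
      (fun i _ => gradMass_nonneg hχ.nonneg (rW_pos _).le)
      (fun i _ => mass_nonneg hχ'.nonneg (rW_pos _).le) fun i hi => ?_
    rw [div_mul_eq_mul_div, le_div_iff₀ (by positivity)]
    have hi := Finset.mem_range.1 hi
    exact mass_sq_mul_le hχ (h.contDiffAt_one_cell hi) (rW_pos _).le (hH_pos β _).le
      ((hH_succ_le_rW hβ i).trans_eq (two_mul_rW_succ i).symm) (h.eq_zero_bottom hi) hχ' hδ.le
      hlevel
  rwa [div_mul_eq_mul_div, le_div_iff₀ (by positivity)] at hsum

lemma totalMass_le_one (h : IsMixedSolution β m u ω) (hβ : 0 ≤ β) (hχ : IsCutoff χ) :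
    totalMass χ u β m ≤ 1 := by
  refine (Finset.sum_le_sum fun i hi => ?_).trans (sum_rW_succ_le_one m)
  have hu := h.contDiffAt_one_cell (Finset.mem_range.1 hi)
  have ha := rW_pos (i + 1)
  have hh : hH β (i + 1) ≤ 1 := (antitone_hH hβ (Nat.le_add_left 1 i)).trans_eq (hH_one β)
  calc mass χ u (rW (i + 1)) (hH β (i + 1)) ≤ 2 * rW (i + 1) * ∫ p in cell β i, χ (u p) :=
        mass_le_mul_setIntegral hχ hu
    _ ≤ 2 * rW (i + 1) * ∫ _ in cell β i, (1 : ℝ) :=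
        mul_le_mul_of_nonneg_left (setIntegral_mono_of_isCompact isCompact_dyadicRect
          (continuousOn_cutoff_comp hχ hu) continuousOn_const fun p _ => hχ.le_one _)
          (by positivity)
    _ = rW i * hH β (i + 1) * rW (i + 1) := by
        rw [setIntegral_one_eq_measureReal, cell, volume_real_dyadicRect ha.le (hH_pos β _).le,
          two_mul_rW_succ]
        ring
    _ ≤ rW (i + 1) :=
        mul_le_of_le_one_left ha.le (mul_le_one₀ (rW_le_one i) (hH_pos β _).le hh)

lemma totalMass_cutoff_sq_mul_le (h : IsMixedSolution β m u ω) (hβ : 1 ≤ β) (hL : 0 < L)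
    (hω : ∀ p ∈ Ddom β m, |ω p| ≤ L) {k k' δ δ' : ℝ} (hk : 0 ≤ k) (hδ : 0 < δ) (hδ' : 0 < δ')
    (hkk' : k + 2 * δ ≤ k') :
    64 * totalMass (cutoff k' δ') u β m ^ 2 * δ ^ 3 ≤
      (200 * L) ^ 3 * totalMass (cutoff k δ) u β m ^ 3 := by
  have hχ := isCutoff_cutoff hk hδ
  have hlevel : ∀ s, cutoff k' δ' s ≠ 0 → δ ≤ primitive (cutoff k δ) s := fun s hs =>
    le_primitive_cutoff hk hδ <| hkk'.trans <| le_of_not_ge <| mt (cutoff_eq_zero_iff hδ').2 hs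
  have hmass := h.totalMass_sq_mul_le hβ hχ (isCutoff_cutoff (by linarith) hδ') hδ hlevel
  have hgrad : totalGradMass (cutoff k δ) u β m ^ 3 ≤
      (18 * L * totalMass (cutoff k δ) u β m) ^ 3 :=
    pow_le_pow_left₀ (totalGradMass_nonneg hχ.nonneg) (h.totalGradMass_le hβ hχ hL hω) 3
  have hmass0 : 0 ≤ totalMass (cutoff k δ) u β m := totalMass_nonneg hχ.nonneg
  calc 64 * totalMass (cutoff k' δ') u β m ^ 2 * δ ^ 3
      = 64 * (totalMass (cutoff k' δ') u β m ^ 2 * δ ^ 3) := by ring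
    _ ≤ 64 * (16 * (18 * L * totalMass (cutoff k δ) u β m) ^ 3) := by linarith
    _ = 5971968 * (L ^ 3 * totalMass (cutoff k δ) u β m ^ 3) := by ring
    _ ≤ 8000000 * (L ^ 3 * totalMass (cutoff k δ) u β m ^ 3) := by gcongr; norm_num
    _ = (200 * L) ^ 3 * totalMass (cutoff k δ) u β m ^ 3 := by ring

lemma totalMass_cutoff_eq_zero (h : IsMixedSolution β m u ω) (hβ : 1 ≤ β) (hL : 0 < L)
    (hω : ∀ p ∈ Ddom β m, |ω p| ≤ L) : totalMass (cutoff (800 * L) L) u β m = 0 := by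
  have hlevel : 800 * L = 4 * (200 * L) := by ring
  rw [hlevel]
  exact eq_zero_of_deGiorgi (N := fun k δ => totalMass (cutoff k δ) u β m)
    (fun _ _ => totalMass_nonneg fun _ => Real.smoothTransition.nonneg _) (by positivity)
    (h.totalMass_le_one (zero_le_one.trans hβ) (isCutoff_cutoff le_rfl (by positivity)))
    (fun _ _ _ _ => h.totalMass_cutoff_sq_mul_le hβ hL hω) hL

lemma le_mul (h : IsMixedSolution β m u ω) (hβ : 1 ≤ β) (hL : 0 < L)
    (hω : ∀ p ∈ Ddom β m, |ω p| ≤ L) : ∀ p ∈ Ddom β m, u p ≤ 800 * L := by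
  intro p hp
  obtain ⟨i, hi, hpi⟩ := mem_Ddom_iff.1 hp
  have hmass : mass (cutoff (800 * L) L) u (rW (i + 1)) (hH β (i + 1)) = 0 :=
    (Finset.sum_eq_zero_iff_of_nonneg fun _ _ => mass_nonneg
      (fun _ => Real.smoothTransition.nonneg _) (rW_pos _).le).1
      (h.totalMass_cutoff_eq_zero hβ hL hω) i (Finset.mem_range.2 hi)
  exact (cutoff_eq_zero_iff hL).1 <| cutoff_eq_zero_of_mass_eq_zero
    (isCutoff_cutoff (by positivity) hL) (h.contDiffAt_one_cell hi) (rW_pos _) (hH_pos β _) hmass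
    p ((closure_Srect_succ β i).le (subset_closure hpi))

lemma abs_le_mul (h : IsMixedSolution β m u ω) (hβ : 1 ≤ β) (hL : 0 < L)
    (hω : ∀ p ∈ Ddom β m, |ω p| ≤ L) : ∀ p ∈ Ddom β m, |u p| ≤ 800 * L := fun p hp =>
  abs_le'.2 ⟨h.le_mul hβ hL hω p hp,
    h.neg.le_mul hβ hL (fun q hq => (abs_neg (ω q)).trans_le (hω q hq)) p hp⟩

lemma bddAbove_abs_source (h : IsMixedSolution β m u ω) (hβ : 0 ≤ β) :
    BddAbove ((fun q => |ω q|) '' Ddom β m) :=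
  ((isCompact_closure_Ddom hβ).bddAbove_image
    (continuousOn_of_forall_contDiffAt h.contDiffAt_source).abs).mono (image_mono subset_closure)

end IsMixedSolution

lemma one_le_cylIntegral (hβ : 0 ≤ β) (hm : 1 ≤ m) (hu : ContinuousOn u (closure (Ddom β m))) :
    1 ≤ cylIntegral β m fun q => (|u q| + 1) ^ 2 := by
  have hint : IntegrableOn (fun p : ℝ × ℝ => (|u p| + 1) ^ 2 * (2 * π * p.1)) (Ddom β m) :=
    ((((hu.abs.add continuousOn_const).pow 2).mul
      (continuousOn_const.mul continuousOn_fst)).integrableOn_compact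
      (isCompact_closure_Ddom hβ)).mono_set subset_closure
  have hrW : rW 1 = 1 / 2 := by linarith [two_mul_rW_succ 0, rW_zero]
  have hvolume : volume.real (Srect β 1) = 1 / 2 := by
    rw [volume_real_Srect_succ β 0, zero_add, hrW, hH_one, mul_one]
  have hsub : Srect β 1 ⊆ Ddom β m := Srect_succ_subset_Ddom hm
  have hnonneg : ∀ p ∈ Ddom β m, 0 ≤ (|u p| + 1) ^ 2 * (2 * π * p.1) := fun p hp => by
    obtain ⟨i, -, hpi⟩ := mem_Ddom_iff.1 hp
    have hr := (rW_pos _).le.trans hpi.1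
    positivity
  have htwo : ∀ p ∈ Srect β 1, 2 ≤ (|u p| + 1) ^ 2 * (2 * π * p.1) := fun p hp => by
    have hr : 1 / 2 ≤ p.1 := hrW ▸ hp.1
    have hsq : 1 ≤ (|u p| + 1) ^ 2 := one_le_pow₀ (le_add_of_nonneg_left (abs_nonneg _))
    have hpi : 2 ≤ 2 * π * p.1 := by nlinarith [Real.pi_gt_three]
    exact hpi.trans (le_mul_of_one_le_left (zero_le_two.trans hpi) hsq)
  calc (1 : ℝ) = 2 * volume.real (Srect β 1) := by rw [hvolume]; norm_num
    _ ≤ ∫ p in Srect β 1, (|u p| + 1) ^ 2 * (2 * π * p.1) :=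
        setIntegral_ge_of_const_le_real (measurableSet_Srect_succ β 0)
          ((measure_mono (hsub.trans subset_closure)).trans_lt
            (isCompact_closure_Ddom hβ).measure_lt_top).ne htwo (hint.mono_set hsub)
    _ ≤ ∫ p in Ddom β m, (|u p| + 1) ^ 2 * (2 * π * p.1) :=
        setIntegral_mono_set hint
          ((ae_restrict_iff' measurableSet_Ddom).2 (.of_forall hnonneg)) hsub.eventuallyLE

end MixedSolution

theorem moser_bound_v3_general {β : ℝ} (hβ : 1 ≤ β) {m : ℕ} {u ω : ℝ × ℝ → ℝ}
    (h : IsMixedSolution β m u ω) :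
    ∀ p ∈ Ddom β m, |u p| ≤ 800 * sSup ((fun q => |ω q|) '' Ddom β m) := by
  intro p hp
  have hω : ∀ q ∈ Ddom β m, |ω q| ≤ sSup ((fun q => |ω q|) '' Ddom β m) := fun q hq =>
    le_csSup (h.bddAbove_abs_source (zero_le_one.trans hβ)) (mem_image_of_mem _ hq)
  refine le_of_forall_pos_le_add fun ε hε => ?_
  have hL : 0 < sSup ((fun q => |ω q|) '' Ddom β m) + ε / 800 :=
    add_pos_of_nonneg_of_pos ((abs_nonneg _).trans (hω p hp)) (by positivity)
  linarith [h.abs_le_mul hβ hL (fun q hq => (hω q hq).trans (by linarith)) p hp]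

/-- Uniform `L^∞` bound for the solution of
`Δ u = -(∂_r ω + ω/r)` with mixed boundary conditions. -/
theorem moser_bound_v3 :
    ∃ C : ℝ,
      ∀ (β : ℝ), 1 < β → β ≤ 1.1 → ∀ (m : ℕ), 1 ≤ m →
      ∀ u ω : ℝ × ℝ → ℝ,
        (∃ U : Set (ℝ × ℝ), IsOpen U ∧ closure (Ddom β m) ⊆ U ∧ ContDiffOn ℝ 2 u U) →
        (∃ U : Set (ℝ × ℝ), IsOpen U ∧ closure (Ddom β m) ⊆ U ∧ ContDiffOn ℝ 1 ω U) →
        (∀ p ∈ Ddom β m, cylLap u p = -(pdr ω p + ω p / p.1)) →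
        (∀ p ∈ bdH β m, u p = 0) →
        (∀ p ∈ bdV β m, pdr u p = 0) →
        ∀ p ∈ Ddom β m,
          |u p| ≤ C * (sSup ((fun q => |ω q|) '' Ddom β m) + 1) ^ ((3 : ℝ) / 2)
            * (cylIntegral β m fun q => (|u q| + 1) ^ 2) ^ ((1 : ℝ) / 2) := by
  refine ⟨800, ?_⟩
  rintro β hβ - m hm u ω ⟨U, hU, hsU, hu⟩ ⟨V, hV, hsV, hω⟩ heq hbH hbV p hp
  have h : IsMixedSolution β m u ω :=
    ⟨fun q hq => hu.contDiffAt (hU.mem_nhds (hsU hq)),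
      fun q hq => hω.contDiffAt (hV.mem_nhds (hsV hq)), heq, hbH, hbV⟩
  exact (moser_bound_v3_general hβ.le h p hp).trans <| mul_le_mul_rpow_mul_rpow (by norm_num)
    (Real.sSup_nonneg <| forall_mem_image.2 fun q _ => abs_nonneg (ω q))
    (one_le_cylIntegral (zero_le_one.trans hβ.le) hm (hu.continuousOn.mono hsU))
    (by norm_num) (by norm_num)
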